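/- arXiv:1801.02331 — 3 statements merged into one kernel-verified Lean document; each statement's English description precedes it below -/
import Mathlib

section
/- Let n, m ≥ 1, let A ∈ M_n(ℝ), let P, Q ∈ M_n(ℝ) be symmetric positive definite with AᵀP + PA + Q negative semidefinite, and let α, β, q > 0 be reals such that α‖x‖² ≤ xᵀPx ≤ β‖x‖² and xᵀQx ≥ q‖x‖² for all x ∈ ℝ^n. Let Γ > 0, B ∈ ℝ^{n×m}, let A_1, …, A_k ∈ M_n(ℝ), and let e : ℝ → ℝ^n, θ̃ : ℝ → ℝ^{n×m}, x̄ : ℝ → ℝ^n, e_1, …, e_k : ℝ → ℝ^n be differentiable functions with e(t) ≠ 0 for all t, satisfying e'(t) = A e(t) + B θ̃(t)ᵀ x̄(t) + Σ_{j=1}^{k} A_j e_j(t) and θ̃'(t) = −Γ · (x̄(t) · (e(t)ᵀ P B)) / (2 √(e(t)ᵀ P e(t))) (outer product of x̄(t) with the row vector e(t)ᵀPB). Then V(t) = √(e(t)ᵀ P e(t)) + Γ⁻¹‖θ̃(t)‖_F² satisfies, for every t, V'(t) ≤ −(q/(2√β))‖e(t)‖ + (β/√α) Σ_{j=1}^{k}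 ‖A_j‖ · ‖e_j(t)‖, where ‖A_j‖ denotes the operator norm of A_j on the Euclidean space ℝ^n. -/
open Matrix

attribute [local instance] Matrix.normedAddCommGroup Matrix.normedSpace

/-!
The adaptive law is chosen so that the derivative of `Γ⁻¹‖θ̃‖_F²` cancels exactly the contribution
of `B θ̃ᵀ x̄` to the derivative of `√(eᵀPe)`. What remains is `eᵀP f / √(eᵀPe)`, with `f` the rest
of the error dynamics. On `f = A e` the Lyapunov inequality gives `eᵀPAe ≤ -(q/2)‖e‖²`, and
`√(eᵀPe) ≤ √β ‖e‖` turns this into the linear decay. On `f = A_j e_j` the Cauchy–Schwarz inequality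
for the form `P` gives at most `√(fᵀPf) ≤ √β ‖f‖`, so the gain `√β` suffices, and
`√β ≤ β/√α` because `α ≤ β`.
-/

section DotProduct

variable {ι κ : Type*} [Fintype ι] [Fintype κ]

theorem dotProduct_mulVec_comm_of_isSymm {R : Type*} [CommSemiring R] {P : Matrix ι ι R}
    (hP : P.IsSymm) (x y : ι → R) : x ⬝ᵥ P *ᵥ y = y ⬝ᵥ P *ᵥ x := by
  simpa only [hP.eq] using dotProduct_transpose_mulVec P x y

theorem sum_sum_mul_vecMulVec {R : Type*} [CommSemiring R] (M : Matrix ι κ R) (x : ι → R)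
    (y : κ → R) : ∑ i, ∑ j, M i j * vecMulVec x y i j = x ⬝ᵥ M *ᵥ y := by
  simp only [dotProduct, mulVec, vecMulVec_apply, Finset.mul_sum, mul_left_comm]

theorem norm_toLp_eq_sqrt_dotProduct (x : ι → ℝ) : ‖WithLp.toLp 2 x‖ = √(x ⬝ᵥ x) := by
  rw [norm_eq_sqrt_real_inner, EuclideanSpace.inner_toLp_toLp, star_trivial]

theorem sqrt_dotProduct_mulVec_le_opNorm_mul [DecidableEq ι] (M : Matrix ι ι ℝ) (x : ι → ℝ) :
    √(M *ᵥ x ⬝ᵥ M *ᵥ x) ≤ ‖toEuclideanCLM (𝕜 := ℝ) M‖ * √(x ⬝ᵥ x) := by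
  simpa only [toEuclideanCLM_toLp, norm_toLp_eq_sqrt_dotProduct] using
    (toEuclideanCLM (𝕜 := ℝ) M).le_opNorm (WithLp.toLp 2 x)

theorem le_of_mul_dotProduct_self_le {a b : ℝ} {x : ι → ℝ} (hx : x ≠ 0)
    (h : a * (x ⬝ᵥ x) ≤ b * (x ⬝ᵥ x)) : a ≤ b :=
  le_of_mul_le_mul_right h (by simpa only [star_trivial] using dotProduct_star_self_pos_iff.2 hx)

end DotProduct

/-- The seminorm `√(xᵀPx)` of a positive semidefinite matrix `P`; for other `P` the square root
truncates negative values of the form to `0`. -/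
noncomputable def weightedNorm {ι : Type*} [Fintype ι] (P : Matrix ι ι ℝ) (x : ι → ℝ) : ℝ :=
  √(x ⬝ᵥ P *ᵥ x)

section WeightedNorm

variable {ι : Type*} [Fintype ι] {P : Matrix ι ι ℝ}

theorem weightedNorm_nonneg (x : ι → ℝ) : 0 ≤ weightedNorm P x :=
  Real.sqrt_nonneg _

theorem weightedNorm_le_sqrt_mul {β : ℝ} (hβ : 0 ≤ β) {x : ι → ℝ}
    (h : x ⬝ᵥ P *ᵥ x ≤ β * (x ⬝ᵥ x)) : weightedNorm P x ≤ √β * √(x ⬝ᵥ x) := by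
  rw [← Real.sqrt_mul hβ]
  exact Real.sqrt_le_sqrt h

theorem dotProduct_mulVec_le_weightedNorm_mul (hP : P.PosSemidef) (x y : ι → ℝ) :
    x ⬝ᵥ P *ᵥ y ≤ weightedNorm P x * weightedNorm P y := by
  classical
  have nonneg (z : ι → ℝ) : 0 ≤ z ⬝ᵥ P *ᵥ z := by
    simpa only [star_trivial] using hP.dotProduct_mulVec_nonneg z
  have cauchy_schwarz : (x ⬝ᵥ P *ᵥ y) ^ 2 ≤ (x ⬝ᵥ P *ᵥ x) * (y ⬝ᵥ P *ᵥ y) := by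
    simpa only [toBilin'_apply'] using P.toBilin'.apply_sq_le_of_symm
      (by simpa only [toBilin'_apply'] using nonneg)
      ⟨(isSymm_toBilin'_iff_isSymm.2 (isHermitian_iff_isSymm.1 hP.isHermitian)).eq⟩ x y
  rw [weightedNorm, weightedNorm, ← Real.sqrt_mul (nonneg x)]
  exact Real.le_sqrt_of_sq_le cauchy_schwarz

theorem dotProduct_mulVec_mulVec_div_weightedNorm_le_opNorm_mul [DecidableEq ι]
    (hP : P.PosSemidef) {β : ℝ} (hβ : 0 ≤ β) (hPβ : ∀ x, x ⬝ᵥ P *ᵥ x ≤ β * (x ⬝ᵥ x))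
    (M : Matrix ι ι ℝ) (x y : ι → ℝ) :
    x ⬝ᵥ P *ᵥ M *ᵥ y / weightedNorm P x ≤
      √β * (‖toEuclideanCLM (𝕜 := ℝ) M‖ * √(y ⬝ᵥ y)) :=
  calc
    x ⬝ᵥ P *ᵥ M *ᵥ y / weightedNorm P x ≤ weightedNorm P (M *ᵥ y) :=
      div_le_of_le_mul₀ (weightedNorm_nonneg x) (weightedNorm_nonneg _)
        ((dotProduct_mulVec_le_weightedNorm_mul hP x _).trans_eq (mul_comm _ _))
    _ ≤ √β * √(M *ᵥ y ⬝ᵥ M *ᵥ y) := weightedNorm_le_sqrt_mul hβ (hPβ _)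
    _ ≤ √β * (‖toEuclideanCLM (𝕜 := ℝ) M‖ * √(y ⬝ᵥ y)) := by
      gcongr
      exact sqrt_dotProduct_mulVec_le_opNorm_mul M y

theorem dotProduct_lyapunov_mulVec (hP : P.IsSymm) (A : Matrix ι ι ℝ) (x : ι → ℝ) :
    x ⬝ᵥ (Aᵀ * P + P * A) *ᵥ x = 2 * (x ⬝ᵥ P *ᵥ A *ᵥ x) := by
  have transpose_term : x ⬝ᵥ Aᵀ *ᵥ P *ᵥ x = x ⬝ᵥ P *ᵥ A *ᵥ x := by
    rw [dotProduct_transpose_mulVec, dotProduct_comm, dotProduct_mulVec_comm_of_isSymm hP]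
  rw [add_mulVec, dotProduct_add, ← mulVec_mulVec, ← mulVec_mulVec, transpose_term, two_mul]

theorem dotProduct_mulVec_div_weightedNorm_le_neg {x y : ι → ℝ}
    (hx : 0 < weightedNorm P x) {β q : ℝ} (hβ : 0 < β) (hq : 0 ≤ q)
    (hPβ : x ⬝ᵥ P *ᵥ x ≤ β * (x ⬝ᵥ x))
    (hxy : x ⬝ᵥ P *ᵥ y ≤ -(q / 2) * (x ⬝ᵥ x)) :
    x ⬝ᵥ P *ᵥ y / weightedNorm P x ≤ -(q / (2 * √β)) * √(x ⬝ᵥ x) := by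
  have sq_norm : √(x ⬝ᵥ x) * √(x ⬝ᵥ x) = x ⬝ᵥ x :=
    Real.mul_self_sqrt (Finset.sum_nonneg fun i _ => mul_self_nonneg (x i))
  have decay : q / (2 * √β) * √(x ⬝ᵥ x) * weightedNorm P x ≤ q / 2 * (x ⬝ᵥ x) :=
    calc
      _ ≤ q / (2 * √β) * √(x ⬝ᵥ x) * (√β * √(x ⬝ᵥ x)) := by
        gcongr
        exact weightedNorm_le_sqrt_mul hβ.le hPβ
      _ = q / 2 * (√(x ⬝ᵥ x) * √(x ⬝ᵥ x)) := by field_simp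
      _ = q / 2 * (x ⬝ᵥ x) := by rw [sq_norm]
  rw [div_le_iff₀ hx]
  linarith

end WeightedNorm

section Deriv

variable {ι κ : Type*} [Fintype ι] {t : ℝ}

theorem hasDerivAt_dotProduct {u v : ℝ → ι → ℝ} {u' v' : ι → ℝ} (hu : HasDerivAt u u' t)
    (hv : HasDerivAt v v' t) :
    HasDerivAt (fun s => u s ⬝ᵥ v s) (u' ⬝ᵥ v t + u t ⬝ᵥ v') t := by
  simp only [dotProduct, ← Finset.sum_add_distrib]
  exact HasDerivAt.fun_sum fun i _ => (hasDerivAt_pi.1 hu i).mul (hasDerivAt_pi.1 hv i)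

theorem hasDerivAt_mulVec [Finite κ] (M : Matrix κ ι ℝ) {u : ℝ → ι → ℝ} {u' : ι → ℝ}
    (hu : HasDerivAt u u' t) : HasDerivAt (fun s => M *ᵥ u s) (M *ᵥ u') t := by
  have := Fintype.ofFinite κ
  exact (LinearMap.toContinuousLinearMap M.mulVecLin).hasFDerivAt.comp_hasDerivAt t hu

theorem hasDerivAt_weightedNorm {P : Matrix ι ι ℝ} (hP : P.IsSymm) {e : ℝ → ι → ℝ} {e' : ι → ℝ}
    (he : HasDerivAt e e' t) (hpos : 0 < weightedNorm P (e t)) :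
    HasDerivAt (fun s => weightedNorm P (e s)) (e t ⬝ᵥ P *ᵥ e' / weightedNorm P (e t)) t := by
  refine ((hasDerivAt_dotProduct he (hasDerivAt_mulVec P he)).sqrt
    (Real.sqrt_pos.1 hpos).ne').congr_deriv ?_
  rw [dotProduct_mulVec_comm_of_isSymm hP e', ← two_mul, mul_div_mul_left _ _ two_ne_zero,
    weightedNorm]

theorem hasDerivAt_sum_sum_sq [Fintype κ] {θ : ℝ → Matrix ι κ ℝ} {θ' : Matrix ι κ ℝ}
    (hθ : HasDerivAt θ θ' t) :
    HasDerivAt (fun s => ∑ i, ∑ j, θ s i j ^ 2) (2 * ∑ i, ∑ j, θ t i j * θ' i j) t := by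
  have entry (i : ι) (j : κ) : HasDerivAt (fun s => θ s i j ^ 2) (2 * (θ t i j * θ' i j)) t := by
    simpa only [Nat.cast_ofNat, Nat.add_one_sub_one, pow_one, mul_assoc] using
      (hasDerivAt_pi.1 (hasDerivAt_pi.1 hθ i) j).fun_pow 2
  simp only [Finset.mul_sum]
  exact HasDerivAt.fun_sum fun i _ => HasDerivAt.fun_sum fun j _ => entry i j

end Deriv

/-- The Lyapunov-type function `√(xᵀPx) + Γ⁻¹‖Θ‖_F²` of the error `x` and the parameter error `Θ`.
The Frobenius norm is spelled out, since the norm in force on matrices is the sup norm. -/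
noncomputable def adaptiveLyapunov {ι κ ρ : Type*} [Fintype ι] [Fintype κ] [Fintype ρ]
    (P : Matrix ι ι ℝ) (Γ : ℝ) (x : ι → ℝ) (Θ : Matrix ρ κ ℝ) : ℝ :=
  weightedNorm P x + Γ⁻¹ * ∑ i, ∑ j, Θ i j ^ 2

section AdaptiveLyapunov

variable {ι κ ρ : Type*} [Fintype ι] [Fintype κ] [Fintype ρ] {P : Matrix ι ι ℝ} {Γ : ℝ}
  {B : Matrix ι κ ℝ} {e : ℝ → ι → ℝ} {θ : ℝ → Matrix ρ κ ℝ} {t : ℝ}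

theorem hasDerivAt_adaptiveLyapunov (hP : P.IsSymm) (hΓ : Γ ≠ 0)
    (hpos : 0 < weightedNorm P (e t)) {f : ι → ℝ} {x : ρ → ℝ}
    (he : HasDerivAt e (f + B *ᵥ (θ t)ᵀ *ᵥ x) t)
    (hθ : HasDerivAt θ
      ((-Γ / (2 * weightedNorm P (e t))) • vecMulVec x (e t ᵥ* P ᵥ* B)) t) :
    HasDerivAt (fun s => adaptiveLyapunov P Γ (e s) (θ s))
      (e t ⬝ᵥ P *ᵥ f / weightedNorm P (e t)) t := by
  have parameter_term : ∑ i, ∑ j, θ t i j *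
      ((-Γ / (2 * weightedNorm P (e t))) • vecMulVec x (e t ᵥ* P ᵥ* B)) i j =
      -Γ / (2 * weightedNorm P (e t)) * (e t ⬝ᵥ P *ᵥ B *ᵥ (θ t)ᵀ *ᵥ x) := by
    rw [← smul_vecMulVec, sum_sum_mul_vecMulVec, smul_dotProduct, smul_eq_mul,
      ← dotProduct_transpose_mulVec, ← dotProduct_mulVec, ← dotProduct_mulVec]
  refine ((hasDerivAt_weightedNorm hP he hpos).add
    ((hasDerivAt_sum_sum_sq hθ).const_mul Γ⁻¹)).congr_deriv ?_
  rw [parameter_term, mulVec_add, dotProduct_add]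
  field_simp
  ring

theorem stmt_1_general [DecidableEq ι] {ν : Type*} [Fintype ν] {A Q : Matrix ι ι ℝ}
    (hP : P.PosSemidef) (hpos : 0 < weightedNorm P (e t))
    (hLyap : ∀ x, x ⬝ᵥ (Aᵀ * P + P * A + Q) *ᵥ x ≤ 0)
    {β q : ℝ} (hβ : 0 < β) (hq : 0 ≤ q) (hPβ : ∀ x, x ⬝ᵥ P *ᵥ x ≤ β * (x ⬝ᵥ x))
    (hQ : ∀ x, q * (x ⬝ᵥ x) ≤ x ⬝ᵥ Q *ᵥ x) (hΓ : Γ ≠ 0)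
    {C : ν → Matrix ι ι ℝ} {x : ρ → ℝ} {w : ν → ι → ℝ}
    (he : HasDerivAt e (A *ᵥ e t + B *ᵥ (θ t)ᵀ *ᵥ x + ∑ j, C j *ᵥ w j) t)
    (hθ : HasDerivAt θ
      ((-Γ / (2 * weightedNorm P (e t))) • vecMulVec x (e t ᵥ* P ᵥ* B)) t) :
    ∃ v : ℝ, HasDerivAt (fun s => adaptiveLyapunov P Γ (e s) (θ s)) v t ∧
      v ≤ -(q / (2 * √β)) * √(e t ⬝ᵥ e t) +
        √β * ∑ j, ‖toEuclideanCLM (𝕜 := ℝ) (C j)‖ * √(w j ⬝ᵥ w j) := by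
  have hPsymm : P.IsSymm := isHermitian_iff_isSymm.1 hP.isHermitian
  have hA : e t ⬝ᵥ P *ᵥ A *ᵥ e t ≤ -(q / 2) * (e t ⬝ᵥ e t) := by
    have h := hLyap (e t)
    rw [add_mulVec, dotProduct_add, dotProduct_lyapunov_mulVec hPsymm] at h
    linarith [hQ (e t)]
  rw [add_right_comm] at he
  refine ⟨_, hasDerivAt_adaptiveLyapunov hPsymm hΓ hpos he hθ, ?_⟩
  rw [mulVec_add, dotProduct_add, add_div, mulVec_sum, dotProduct_sum, Finset.sum_div,
    Finset.mul_sum]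
  gcongr with j
  · exact dotProduct_mulVec_div_weightedNorm_le_neg hpos hβ hq (hPβ _) hA
  · exact dotProduct_mulVec_mulVec_div_weightedNorm_le_opNorm_mul hP hβ.le hPβ _ _ _

end AdaptiveLyapunov

theorem sqrt_le_div_sqrt {α β : ℝ} (hα : 0 < α) (h : α ≤ β) : √β ≤ β / √α :=
  calc
    √β = β / √β := Real.div_sqrt.symm
    _ ≤ β / √α := by
      have hβ := hα.le.trans h
      gcongr

/-- The key differential inequality (29) in the proof of Theorem 1: for an adaptive
subsystem coupled to neighbouring error signals `e j` through interconnection matrices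
`Aint j`, the Lyapunov-type function `V = √(eᵀPe) + Γ⁻¹‖θ̃‖_F²` satisfies
`V' ≤ -(q/(2√β))‖e‖ + (β/√α) Σ_j ‖A_j‖‖e_j‖`. -/
theorem stmt_1 (n m k : ℕ) (hn : 1 ≤ n) (hm : 1 ≤ m)
    (A P Q : Matrix (Fin n) (Fin n) ℝ)
    (hPsymm : P.IsSymm)
    (hPpos : ∀ x : Fin n → ℝ, x ≠ 0 → 0 < x ⬝ᵥ P.mulVec x)
    (hQsymm : Q.IsSymm)
    (hQpos : ∀ x : Fin n → ℝ, x ≠ 0 → 0 < x ⬝ᵥ Q.mulVec x)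
    (hLyap : ∀ x : Fin n → ℝ, x ⬝ᵥ (Aᵀ * P + P * A + Q).mulVec x ≤ 0)
    (α β q : ℝ) (hα : 0 < α) (hβ : 0 < β) (hq : 0 < q)
    (hPlow : ∀ x : Fin n → ℝ, α * (x ⬝ᵥ x) ≤ x ⬝ᵥ P.mulVec x)
    (hPhigh : ∀ x : Fin n → ℝ, x ⬝ᵥ P.mulVec x ≤ β * (x ⬝ᵥ x))
    (hQlow : ∀ x : Fin n → ℝ, q * (x ⬝ᵥ x) ≤ x ⬝ᵥ Q.mulVec x)
    (Γ : ℝ) (hΓ : 0 < Γ)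
    (B : Matrix (Fin n) (Fin m) ℝ)
    (Aint : Fin k → Matrix (Fin n) (Fin n) ℝ)
    (e : ℝ → Fin n → ℝ) (θ : ℝ → Matrix (Fin n) (Fin m) ℝ) (xb : ℝ → Fin n → ℝ)
    (ej : Fin k → ℝ → Fin n → ℝ)
    (hxb : Differentiable ℝ xb)
    (hej : ∀ j, Differentiable ℝ (ej j))
    (he0 : ∀ t, e t ≠ 0)
    (hde : ∀ t, HasDerivAt e
        (A.mulVec (e t) + B.mulVec ((θ t)ᵀ.mulVec (xb t)) +
          ∑ j, (Aint j).mulVec (ej j t)) t)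
    (hdθ : ∀ t, HasDerivAt θ
        ((-Γ / (2 * Real.sqrt (e t ⬝ᵥ P.mulVec (e t)))) •
          vecMulVec (xb t) (vecMul (vecMul (e t) P) B)) t) :
    ∀ t, ∃ v : ℝ,
      HasDerivAt
        (fun t => Real.sqrt (e t ⬝ᵥ P.mulVec (e t)) + Γ⁻¹ * ∑ i, ∑ j, (θ t i j) ^ 2) v t ∧
      v ≤ -(q / (2 * Real.sqrt β)) * Real.sqrt (e t ⬝ᵥ e t) +
          (β / Real.sqrt α) *
            ∑ j, ‖Matrix.toEuclideanCLM (𝕜 := ℝ) (Aint j)‖ * Real.sqrt (ej j t ⬝ᵥ ej j t) := by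
  intro t
  have hP : P.PosDef := .of_dotProduct_mulVec_pos (isHermitian_iff_isSymm.2 hPsymm)
    (by simpa only [star_trivial] using hPpos)
  have hαβ : α ≤ β := le_of_mul_dotProduct_self_le (he0 t) ((hPlow _).trans (hPhigh _))
  obtain ⟨v, hv, hle⟩ := stmt_1_general hP.posSemidef (Real.sqrt_pos.2 (hPpos _ (he0 t))) hLyap
    hβ hq.le hPhigh hQlow hΓ.ne' (hde t) (hdθ t)
  exact ⟨v, hv, hle.trans (by gcongr; exact sqrt_le_div_sqrt hα hαβ)⟩
end

section
/- Let n ≥ 1, let A ∈ M_n(ℝ), and let N > 0 and Ξ > 0 be real numbers. Consider the 2n×2n real Hamiltonian matrix H = fromBlocks A (N·I) (−Ξ²·I) (−Aᵀ). Then H is hyperbolic — i.e. regarded as a complex matrix it has no purely imaginary eigenvalue iω with ω ∈ ℝ — if and only if for every ω ∈ ℝ, σ_min(A − iωI) > Ξ√N, where A is regarded as a complex n×n matrix. -/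
open Matrix

/-- The smallest singular value of a complex matrix: the infimum of `‖M v‖` over
unit vectors `v ∈ ℂ^n`. -/
noncomputable def sigmaMin {n : ℕ} (M : Matrix (Fin n) (Fin n) ℂ) : ℝ :=
  sInf {r : ℝ | ∃ v : EuclideanSpace ℂ (Fin n), ‖v‖ = 1 ∧ r = ‖Matrix.toEuclideanLin M v‖}

/-! Let `H` have blocks `A`, `rI`, `-qI`, `-Aᴴ` with `rq ≥ 0`, and put `M = A - iωI`. Then
`iωI - H` has blocks `-M`, `-rI`, `qI`, `Mᴴ`. Its upper blocks commute, so its determinant is that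
of `rqI - MᴴM`, and `iω` is an eigenvalue of `H` exactly when `√(rq)` is a singular value of `M`.
Thus if `H` is not hyperbolic, some `σ_min(A - iωI)` is at most `√(rq)`. Conversely,
`ω ↦ σ_min(A - iωI)` is continuous and unbounded, so if it is at most `√(rq)` somewhere then it
takes the value `√(rq)`, and the smallest singular value is a singular value. -/

section BlockDeterminant

open Polynomial

variable {m R : Type*} [Fintype m] [DecidableEq m] [CommRing R]

theorem det_fromBlocks_mul_det_of_commute {A B : Matrix m m R} (C D : Matrix m m R)
    (h : Commute A B) :
    (fromBlocks A B C D).det * A.det = (D * A - C * B).det * A.det := by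
  have elimination :
      fromBlocks A B C D * fromBlocks 1 (-B) 0 A = fromBlocks A 0 C (D * A - C * B) := by
    simp [fromBlocks_multiply, h.eq, sub_eq_neg_add]
  simpa [det_fromBlocks_zero₁₂, det_fromBlocks_zero₂₁, mul_comm] using congrArg det elimination

-- Over `R[X]`, replacing `A` by `A + X` makes `det A` a monic, hence cancellable, polynomial.
theorem det_fromBlocks_of_commute {A B : Matrix m m R} (C D : Matrix m m R) (h : Commute A B) :
    (fromBlocks A B C D).det = (D * A - C * B).det := by
  let toPoly := (Polynomial.C : R →+* R[X]).mapMatrix (m := m)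
  let eval₀ := (evalRingHom (0 : R)).mapMatrix (m := m)
  have eval_toPoly (M : Matrix m m R) : eval₀ (toPoly M) = M := by
    ext; simp [eval₀, toPoly]
  have eval_charmatrix : eval₀ (charmatrix (-A)) = A := by
    ext i j; by_cases hij : i = j <;> simp [eval₀, charmatrix, hij]
  have commute_charmatrix : Commute (charmatrix (-A)) (toPoly B) :=
    (scalar_commute _ (Commute.all _) _).sub_left (h.neg_left.map toPoly)
  have cancelled := (charpoly_monic (-A)).isRegular.right
    (det_fromBlocks_mul_det_of_commute (toPoly C) (toPoly D) commute_charmatrix)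
  have evaluated := congrArg (evalRingHom (0 : R)) cancelled
  rw [RingHom.map_det, RingHom.map_det, RingHom.mapMatrix_apply, fromBlocks_map] at evaluated
  simpa only [← RingHom.mapMatrix_apply, eval₀, map_sub, map_mul, eval_toPoly, eval_charmatrix]
    using evaluated

end BlockDeterminant

section HilbertSpace

open ContinuousLinearMap Metric

variable {𝕜 E F : Type*} [RCLike 𝕜] [NormedAddCommGroup E] [InnerProductSpace 𝕜 E]
  [CompleteSpace E] [NormedAddCommGroup F] [InnerProductSpace 𝕜 F] [CompleteSpace F]
  {T : E →L[𝕜] F}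

theorem adjoint_comp_self_apply_eq_smul_of_isMinOn_norm {v : E}
    (hmin : IsMinOn (fun w ↦ ‖T w‖) (sphere 0 ‖v‖) v) :
    (adjoint T ∘L T) v = (((‖T v‖ / ‖v‖) ^ 2 : ℝ) : 𝕜) • v := by
  have re_inner (w : E) : (adjoint T ∘L T).reApplyInnerSelf w = ‖T w‖ ^ 2 := by
    rw [reApplyInnerSelf_apply, ← apply_norm_sq_eq_inner_adjoint_left]
  have hmin_sq : IsMinOn (adjoint T ∘L T).reApplyInnerSelf (sphere 0 ‖v‖) v := by
    intro w hw
    simpa only [Set.mem_ofPred_eq, re_inner] using! pow_le_pow_left₀ (norm_nonneg _) (hmin hw) 2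
  have self_adjoint : IsSelfAdjoint (adjoint T ∘L T) := T.isPositive_adjoint_comp_self.isSelfAdjoint
  rw [self_adjoint.eq_smul_self_of_isLocalExtrOn (.inl hmin_sq.localize), rayleighQuotient,
    re_inner, div_pow]

theorem norm_apply_eq_of_adjoint_comp_self_apply_eq_smul {s : ℝ} (hs : 0 ≤ s) {v : E}
    (hv : (adjoint T ∘L T) v = ((s ^ 2 : ℝ) : 𝕜) • v) : ‖T v‖ = s * ‖v‖ := by
  rw [apply_norm_eq_sqrt_inner_adjoint_left, hv, inner_smul_left, RCLike.conj_ofReal,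
    RCLike.re_ofReal_mul, inner_self_eq_norm_sq, ← mul_pow, Real.sqrt_sq (by positivity)]

theorem mem_spectrum_conjTranspose_mul_self_iff {m : Type*} [Fintype m] [DecidableEq m]
    {M : Matrix m m 𝕜} {μ : 𝕜} :
    μ ∈ spectrum 𝕜 (Mᴴ * M) ↔ ∃ v : EuclideanSpace 𝕜 m, v ≠ 0 ∧
      (adjoint (toEuclideanCLM (𝕜 := 𝕜) M) ∘L toEuclideanCLM (𝕜 := 𝕜) M) v = μ • v := by
  have gram : toEuclideanLin (Mᴴ * M) =
      (adjoint (toEuclideanCLM (𝕜 := 𝕜) M) ∘L toEuclideanCLM (𝕜 := 𝕜) M : _ →L[𝕜] _) := by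
    rw [← coe_toEuclideanCLM_eq_toEuclideanLin, map_mul, ← star_eq_conjTranspose, map_star]
    rfl
  rw [← spectrum_toLpLin 2, ← Module.End.hasEigenvalue_iff_mem_spectrum, gram]
  refine ⟨fun h ↦ ?_, fun ⟨v, hv, hμ⟩ ↦ ?_⟩
  · obtain ⟨v, hv⟩ := h.exists_hasEigenvector
    exact ⟨v, hv.2, hv.apply_eq_smul⟩
  · exact Module.End.hasEigenvalue_of_hasEigenvector
      ⟨Module.End.mem_eigenspace_iff.mpr hμ, hv⟩

end HilbertSpace

section SigmaMin

open Metric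
open scoped Matrix.Norms.L2Operator

variable {n : ℕ}

theorem sigmaMin_le_norm (M : Matrix (Fin n) (Fin n) ℂ) {v : EuclideanSpace ℂ (Fin n)}
    (hv : ‖v‖ = 1) : sigmaMin M ≤ ‖toEuclideanLin M v‖ :=
  csInf_le ⟨0, by rintro _ ⟨w, -, rfl⟩; exact norm_nonneg _⟩ ⟨v, hv, rfl⟩

theorem sigmaMin_mul_norm_le (M : Matrix (Fin n) (Fin n) ℂ) (v : EuclideanSpace ℂ (Fin n)) :
    sigmaMin M * ‖v‖ ≤ ‖toEuclideanLin M v‖ := by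
  rcases eq_or_ne v 0 with rfl | hv
  · simp
  have normalized := sigmaMin_le_norm M (norm_smul_inv_norm (𝕜 := ℂ) hv)
  rw [map_smul, norm_smul, norm_inv, RCLike.norm_ofReal, abs_norm, ← div_eq_inv_mul] at normalized
  exact (le_div_iff₀ (norm_pos_iff.mpr hv)).mp normalized

theorem exists_norm_eq_sigmaMin [NeZero n] (M : Matrix (Fin n) (Fin n) ℂ) :
    ∃ v : EuclideanSpace ℂ (Fin n), ‖v‖ = 1 ∧ ‖toEuclideanLin M v‖ = sigmaMin M := by
  obtain ⟨v, hv, hmin⟩ := (isCompact_sphere (0 : EuclideanSpace ℂ (Fin n)) 1).exists_isMinOn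
    (NormedSpace.sphere_nonempty.mpr zero_le_one)
    (toEuclideanLin M).continuous_of_finiteDimensional.norm.continuousOn
  rw [mem_sphere_zero_iff_norm] at hv
  refine ⟨v, hv, le_antisymm (le_csInf ⟨_, v, hv, rfl⟩ ?_) (sigmaMin_le_norm M hv)⟩
  rintro _ ⟨w, hw, rfl⟩
  exact hmin (mem_sphere_zero_iff_norm.mpr hw)

theorem sigmaMin_sub_norm_sub_le (M M' : Matrix (Fin n) (Fin n) ℂ) :
    sigmaMin M - ‖M - M'‖ ≤ sigmaMin M' := by
  rcases eq_zero_or_neZero n with rfl | _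
  · simp [Subsingleton.elim M M']
  obtain ⟨v, hv, hv_min⟩ := exists_norm_eq_sigmaMin M'
  have perturbation : ‖toEuclideanLin (M - M') v‖ ≤ ‖M - M'‖ := by
    simpa only [hv, mul_one] using! l2_opNorm_mulVec (M - M') v
  calc sigmaMin M - ‖M - M'‖
      ≤ ‖toEuclideanLin M v‖ - ‖toEuclideanLin (M - M') v‖ :=
        sub_le_sub (sigmaMin_le_norm M hv) perturbation
    _ ≤ ‖toEuclideanLin M v - toEuclideanLin (M - M') v‖ := norm_sub_norm_le _ _
    _ = sigmaMin M' := by rw [← hv_min, ← LinearMap.sub_apply, ← map_sub, sub_sub_cancel]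

theorem continuous_sigmaMin :
    Continuous (sigmaMin : Matrix (Fin n) (Fin n) ℂ → ℝ) := by
  refine (LipschitzWith.of_le_add fun M M' ↦ ?_).continuous
  rw [dist_eq_norm, ← sub_le_iff_le_add]
  exact sigmaMin_sub_norm_sub_le M M'

theorem sigmaMin_smul_one [NeZero n] (z : ℂ) :
    sigmaMin (z • (1 : Matrix (Fin n) (Fin n) ℂ)) = ‖z‖ := by
  obtain ⟨v, hv, hv_min⟩ := exists_norm_eq_sigmaMin (z • (1 : Matrix (Fin n) (Fin n) ℂ))
  rw [← hv_min, map_smul, toLpLin_one, LinearMap.smul_apply, LinearMap.id_apply, norm_smul, hv,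
    mul_one]

theorem norm_sub_norm_le_sigmaMin_sub_smul_one [NeZero n] (A : Matrix (Fin n) (Fin n) ℂ) (z : ℂ) :
    ‖z‖ - ‖A‖ ≤ sigmaMin (A - z • 1) := by
  have perturbation := sigmaMin_sub_norm_sub_le (-z • 1) (A - z • 1)
  rwa [sigmaMin_smul_one, norm_neg, neg_smul, neg_sub_left, sub_add_cancel, norm_neg]
    at perturbation

theorem exists_sigmaMin_sub_smul_one_eq [NeZero n] (A : Matrix (Fin n) (Fin n) ℂ) {ω₀ s : ℝ}
    (hs : sigmaMin (A - ((ω₀ : ℂ) * Complex.I) • 1) ≤ s) :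
    ∃ ω : ℝ, sigmaMin (A - ((ω : ℂ) * Complex.I) • 1) = s := by
  have continuous_line : Continuous fun ω : ℝ ↦ sigmaMin (A - ((ω : ℂ) * Complex.I) • 1) :=
    continuous_sigmaMin.comp (by fun_prop)
  refine mem_range_of_exists_le_of_exists_ge continuous_line ⟨ω₀, hs⟩ ⟨s + ‖A‖, ?_⟩
  have growth := norm_sub_norm_le_sigmaMin_sub_smul_one A (((s + ‖A‖ : ℝ) : ℂ) * Complex.I)
  rw [norm_mul, Complex.norm_I, mul_one, Complex.norm_real] at growth
  linarith [Real.le_norm_self (s + ‖A‖)]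

theorem sigmaMin_sq_mem_spectrum [NeZero n] (M : Matrix (Fin n) (Fin n) ℂ) :
    ((sigmaMin M ^ 2 : ℝ) : ℂ) ∈ spectrum ℂ (Mᴴ * M) := by
  obtain ⟨v, hv, hv_min⟩ := exists_norm_eq_sigmaMin M
  have hmin : IsMinOn (fun w ↦ ‖toEuclideanCLM (𝕜 := ℂ) M w‖) (sphere 0 ‖v‖) v := by
    intro w hw
    rw [hv, mem_sphere_zero_iff_norm] at hw
    exact hv_min.trans_le (sigmaMin_le_norm M hw)
  refine mem_spectrum_conjTranspose_mul_self_iff.mpr ⟨v, norm_ne_zero_iff.mp (by simp [hv]), ?_⟩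
  rw [adjoint_comp_self_apply_eq_smul_of_isMinOn_norm hmin, hv, div_one, ← hv_min]
  rfl

theorem sigmaMin_le_of_sq_mem_spectrum {M : Matrix (Fin n) (Fin n) ℂ} {s : ℝ} (hs : 0 ≤ s)
    (h : ((s ^ 2 : ℝ) : ℂ) ∈ spectrum ℂ (Mᴴ * M)) : sigmaMin M ≤ s := by
  obtain ⟨v, hv, hsv⟩ := mem_spectrum_conjTranspose_mul_self_iff.mp h
  refine le_of_mul_le_mul_right ?_ (norm_pos_iff.mpr hv)
  exact (sigmaMin_mul_norm_le M v).trans_eq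
    (norm_apply_eq_of_adjoint_comp_self_apply_eq_smul hs hsv)

end SigmaMin

section Hamiltonian

variable {m : Type*} [DecidableEq m]

/-- The Hamiltonian matrix of the algebraic Riccati equation with drift matrix `A` and the scalar
weight matrices `r • 1` and `q • 1`. -/
def hamiltonian (A : Matrix m m ℂ) (r q : ℝ) : Matrix (m ⊕ m) (m ⊕ m) ℂ :=
  fromBlocks A ((r : ℂ) • 1) (-((q : ℂ) • 1)) (-Aᴴ)

theorem map_ofReal_fromBlocks_eq_hamiltonian (A : Matrix m m ℝ) (r q : ℝ) :
    (fromBlocks A (r • 1) (-q • 1) (-Aᵀ)).map Complex.ofReal =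
      hamiltonian (A.map Complex.ofReal) r q := by
  ext (i | i) (j | j) <;> by_cases hij : i = j <;> simp [hamiltonian, hij]

theorem I_mul_mem_spectrum_hamiltonian_iff [Fintype m] (A : Matrix m m ℂ) (r q ω : ℝ) :
    Complex.I * (ω : ℂ) ∈ spectrum ℂ (hamiltonian A r q) ↔
      ((r * q : ℝ) : ℂ) ∈ spectrum ℂ
        ((A - ((ω : ℂ) * Complex.I) • 1)ᴴ * (A - ((ω : ℂ) * Complex.I) • 1)) := by
  set M := A - ((ω : ℂ) * Complex.I) • (1 : Matrix m m ℂ) with hM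
  have blocks : algebraMap ℂ _ (Complex.I * ω) - hamiltonian A r q =
      fromBlocks (-M) (-((r : ℂ) • 1)) ((q : ℂ) • 1) Mᴴ := by
    rw [Algebra.algebraMap_eq_smul_one, ← fromBlocks_one, fromBlocks_smul, hamiltonian,
      sub_eq_add_neg, fromBlocks_neg, fromBlocks_add]
    simp [hM, mul_comm, sub_eq_neg_add, add_comm]
  have commute_upper : Commute (-M) (-((r : ℂ) • 1)) :=
    ((Commute.one_right _).smul_right _).neg_right
  have schur : Mᴴ * -M - (q : ℂ) • 1 * -((r : ℂ) • 1) =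
      algebraMap ℂ _ ((r * q : ℝ) : ℂ) - Mᴴ * M := by
    simp [Algebra.algebraMap_eq_smul_one, -Complex.coe_smul, smul_smul, sub_eq_neg_add, add_comm]
  rw [spectrum.mem_iff, spectrum.mem_iff, blocks, isUnit_iff_isUnit_det,
    det_fromBlocks_of_commute _ _ commute_upper, schur, ← isUnit_iff_isUnit_det]

end Hamiltonian

theorem stmt_6_general {n : ℕ} (hn : 1 ≤ n) (A : Matrix (Fin n) (Fin n) ℂ) {r q : ℝ}
    (hrq : 0 ≤ r * q) :
    (∀ ω : ℝ, Complex.I * (ω : ℂ) ∉ spectrum ℂ (hamiltonian A r q)) ↔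
      ∀ ω : ℝ, Real.sqrt (r * q) < sigmaMin (A - ((ω : ℂ) * Complex.I) • 1) := by
  have : NeZero n := ⟨Nat.one_le_iff_ne_zero.mp hn⟩
  simp only [I_mul_mem_spectrum_hamiltonian_iff]
  rw [← not_iff_not]
  push Not
  constructor
  · rintro ⟨ω, hω⟩
    rw [← Real.sq_sqrt hrq] at hω
    exact ⟨ω, sigmaMin_le_of_sq_mem_spectrum (Real.sqrt_nonneg _) hω⟩
  · rintro ⟨ω₀, hω₀⟩
    obtain ⟨ω, hω⟩ := exists_sigmaMin_sub_smul_one_eq A hω₀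
    refine ⟨ω, ?_⟩
    rw [← Real.sq_sqrt hrq, ← hω]
    exact sigmaMin_sq_mem_spectrum _

/-- Lemma 2: the Hamiltonian matrix `fromBlocks A (N·I) (−Ξ²·I) (−Aᵀ)` is hyperbolic
(no purely imaginary eigenvalue) if and only if `σ_min(A − iωI) > Ξ√N` for all `ω ∈ ℝ`. -/
theorem stmt_6 (n : ℕ) (hn : 1 ≤ n) (A : Matrix (Fin n) (Fin n) ℝ)
    (N Ξ : ℝ) (hN : 0 < N) (hΞ : 0 < Ξ) :
    (∀ ω : ℝ, Complex.I * (ω : ℂ) ∉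
        spectrum ℂ ((Matrix.fromBlocks A (N • (1 : Matrix (Fin n) (Fin n) ℝ))
          ((-(Ξ ^ 2)) • (1 : Matrix (Fin n) (Fin n) ℝ)) (-Aᵀ)).map Complex.ofReal)) ↔
      (∀ ω : ℝ, Ξ * Real.sqrt N <
        sigmaMin (A.map Complex.ofReal -
          ((ω : ℂ) * Complex.I) • (1 : Matrix (Fin n) (Fin n) ℂ))) := by
  rw [map_ofReal_fromBlocks_eq_hamiltonian, stmt_6_general hn _ (by positivity),
    mul_comm N, Real.sqrt_mul (sq_nonneg Ξ), Real.sqrt_sq hΞ.le]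
end

section
/- Let n ≥ 1, let A ∈ M_n(ℝ) be Hurwitz, let X ∈ M_n(ℝ) be symmetric, and let S ∈ M_n(ℝ) be symmetric positive definite with AᵀX + XA + S = 0. Then X is positive definite. -/
open Matrix

/-- A real square matrix is Hurwitz if every eigenvalue of it, regarded as a complex
matrix, has strictly negative real part. -/
def IsHurwitz {n : ℕ} (A : Matrix (Fin n) (Fin n) ℝ) : Prop :=
  ∀ μ ∈ spectrum ℂ (A.map Complex.ofReal), μ.re < 0

/-!
The Cayley transform `C = (1 + A)(1 - A)⁻¹` maps the open left half-plane into the open unit disc,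
so `C` has spectral radius less than one and `C ^ k → 0` by Gelfand's formula. Writing
`x = w - A w`, so that `C x = w + A w`, the Lyapunov equation says exactly that the form
`q x = Re (x* X x)` decreases strictly along `C`: `q (C x) - q x = 2 Re (w* (A* X + X A) w) < 0`.
Hence `q x > q (C x) ≥ lim q (C ^ k x) = 0`. These powers play the role of the flow `e^{At}` in the
integral formula `X = ∫₀^∞ e^{Aᵀt} S e^{At} dt`.
-/

open Filter Topology

section Iteration

variable {α β : Type*} [TopologicalSpace α] [TopologicalSpace β] [Preorder β]
  [OrderClosedTopology β]

theorem lt_of_tendsto_iterate_of_forall_lt {f : α → α} {q : α → β} {x₀ x : α}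
    (hfix : f x₀ = x₀) (hq : ContinuousAt q x₀) (hlt : ∀ y, y ≠ x₀ → q (f y) < q y)
    (hlim : Tendsto (fun k ↦ f^[k] x) atTop (𝓝 x₀)) (hx : x ≠ x₀) : q x₀ < q x := by
  have hle (y : α) : q (f y) ≤ q y := by
    obtain rfl | hy := eq_or_ne y x₀
    · rw [hfix]
    · exact (hlt y hy).le
  have hanti : Antitone fun k ↦ q (f^[k] x) := antitone_nat_of_succ_le fun k ↦ by
    simpa only [Function.iterate_succ_apply'] using hle (f^[k] x)
  have hfirst : q x₀ ≤ q (f x) := hanti.le_of_tendsto (hq.tendsto.comp hlim) 1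
  exact hfirst.trans_lt (hlt x hx)

end Iteration

theorem isTopologicallyNilpotent_of_spectralRadius_lt_one {R : Type*} [NormedRing R]
    [NormedAlgebra ℂ R] [CompleteSpace R] {a : R} (ha : spectralRadius ℂ a < 1) :
    IsTopologicallyNilpotent a := by
  obtain ⟨r, har, hr⟩ := ENNReal.lt_iff_exists_nnreal_btwn.mp ha
  have hroot : ∀ᶠ k : ℕ in atTop, (‖a ^ k‖₊ : ENNReal) ^ (1 / k : ℝ) < r :=
    (spectrum.gelfand_formula a).eventually_lt_const har
  have hgeom : Tendsto (fun k : ℕ ↦ (r : ℝ) ^ k) atTop (𝓝 0) :=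
    tendsto_pow_atTop_nhds_zero_of_lt_one r.2 (mod_cast hr)
  refine squeeze_zero_norm' ?_ hgeom
  filter_upwards [hroot, eventually_gt_atTop 0] with k hk hkpos
  rw [one_div, ENNReal.rpow_inv_lt_iff (by positivity), ENNReal.rpow_natCast] at hk
  exact_mod_cast hk.le

section CayleyTransform

variable {R : Type*} [Ring R] {a : R}

/-- The Cayley transform `(1 + a)(1 - a)⁻¹` of a ring element, which exchanges continuous-time
and discrete-time stability. Its value is `0` when `1 - a` is not invertible. -/
noncomputable def cayleyTransform (a : R) : R := (1 + a) * Ring.inverse (1 - a)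

theorem cayleyTransform_mul_one_sub (ha : IsUnit (1 - a)) :
    cayleyTransform a * (1 - a) = 1 + a :=
  Ring.inverse_mul_cancel_right _ _ ha

theorem isUnit_one_sub_of_forall_spectrum_re_neg [Algebra ℂ R] (ha : ∀ μ ∈ spectrum ℂ a, μ.re < 0) :
    IsUnit (1 - a) := by
  have hone : (1 : ℂ) ∉ spectrum ℂ a := fun h ↦ absurd (ha 1 h) (by norm_num)
  simpa only [map_one] using spectrum.notMem_iff.mp hone

theorem exists_mem_spectrum_of_mem_spectrum_cayleyTransform {𝕜 : Type*} [Field 𝕜]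
    [NeZero (2 : 𝕜)] [Algebra 𝕜 R] (ha : IsUnit (1 - a)) {μ : 𝕜}
    (hμ : μ ∈ spectrum 𝕜 (cayleyTransform a)) :
    ∃ ν ∈ spectrum 𝕜 a, μ * (1 - ν) = 1 + ν := by
  have hfactor : (algebraMap 𝕜 R μ - cayleyTransform a) * (1 - a) =
      algebraMap 𝕜 R (μ - 1) - algebraMap 𝕜 R (μ + 1) * a := by
    rw [sub_mul, cayleyTransform_mul_one_sub ha, map_sub, map_add, map_one]
    noncomm_ring
  have hsingular : ¬IsUnit (algebraMap 𝕜 R (μ - 1) - algebraMap 𝕜 R (μ + 1) * a) := by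
    rwa [← hfactor, ha.mul_right_iff]
  have hμ1 : μ + 1 ≠ 0 := by
    intro h
    have hne : μ - 1 ≠ 0 := by
      rw [show μ - 1 = -2 by linear_combination h]
      exact neg_ne_zero.mpr two_ne_zero
    apply hsingular
    simpa only [h, map_zero, zero_mul, sub_zero] using hne.isUnit.map (algebraMap 𝕜 R)
  refine ⟨(μ - 1) / (μ + 1), fun hunit ↦ hsingular ?_, by field_simp; ring⟩
  convert (hμ1.isUnit.map (algebraMap 𝕜 R)).mul hunit using 1
  rw [mul_sub, ← map_mul, mul_div_cancel₀ _ hμ1]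

theorem norm_one_add_lt_norm_one_sub {ν : ℂ} (hν : ν.re < 0) : ‖1 + ν‖ < ‖1 - ν‖ := by
  rw [← sq_lt_sq₀ (norm_nonneg _) (norm_nonneg _)]
  simp only [Complex.sq_norm, Complex.normSq_apply, Complex.add_re, Complex.sub_re,
    Complex.add_im, Complex.sub_im, Complex.one_re, Complex.one_im]
  linarith

theorem norm_lt_one_of_mem_spectrum_cayleyTransform [Algebra ℂ R]
    (ha : ∀ ν ∈ spectrum ℂ a, ν.re < 0) {μ : ℂ} (hμ : μ ∈ spectrum ℂ (cayleyTransform a)) :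
    ‖μ‖ < 1 := by
  obtain ⟨ν, hν, hμν⟩ := exists_mem_spectrum_of_mem_spectrum_cayleyTransform
    (isUnit_one_sub_of_forall_spectrum_re_neg ha) hμ
  have hlt : ‖1 + ν‖ < ‖1 - ν‖ := norm_one_add_lt_norm_one_sub (ha ν hν)
  have hpos : 0 < ‖1 - ν‖ := (norm_nonneg _).trans_lt hlt
  rwa [← hμν, norm_mul, mul_lt_iff_lt_one_left hpos] at hlt

end CayleyTransform

section LyapunovForm

variable {E : Type*} [NormedAddCommGroup E] [NormedSpace ℂ E]

theorem bilinForm_cayleyTransform_lt {T : E →L[ℂ] E} (hT : IsUnit (1 - T))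
    {B : LinearMap.BilinForm ℝ E} (hneg : ∀ x, x ≠ 0 → B (T x) x + B x (T x) < 0)
    {x : E} (hx : x ≠ 0) :
    B (cayleyTransform T x) (cayleyTransform T x) < B x x := by
  obtain ⟨w, rfl⟩ : ∃ w, w - T w = x :=
    ⟨Ring.inverse (1 - T) x, DFunLike.congr_fun (Ring.mul_inverse_cancel _ hT) x⟩
  have hw : w ≠ 0 := by
    rintro rfl
    simp at hx
  have hcayley : cayleyTransform T (w - T w) = w + T w :=
    DFunLike.congr_fun (cayleyTransform_mul_one_sub hT) w
  rw [hcayley]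
  simp only [map_add, map_sub, LinearMap.add_apply, LinearMap.sub_apply]
  linarith [hneg w hw]

theorem bilinForm_pos_of_lyapunov [CompleteSpace E] {T : E →L[ℂ] E}
    (hT : ∀ μ ∈ spectrum ℂ T, μ.re < 0) {B : LinearMap.BilinForm ℝ E}
    (hB : Continuous fun x ↦ B x x) (hneg : ∀ x, x ≠ 0 → B (T x) x + B x (T x) < 0)
    {x : E} (hx : x ≠ 0) : 0 < B x x := by
  have : Nontrivial E := ⟨x, 0, hx⟩
  have hunit : IsUnit (1 - T) := isUnit_one_sub_of_forall_spectrum_re_neg hT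
  have hradius : spectralRadius ℂ (cayleyTransform T) < 1 :=
    spectrum.spectralRadius_lt_of_forall_lt _ fun _ ↦
      norm_lt_one_of_mem_spectrum_cayleyTransform hT
  have hlim : Tendsto (fun k ↦ (⇑(cayleyTransform T))^[k] x) atTop (𝓝 0) := by
    have hpow := isTopologicallyNilpotent_of_spectralRadius_lt_one hradius
    simpa [FunLike.coe_pow_eq_iterate, Function.comp_def] using
      ((ContinuousLinearMap.apply ℂ E x).continuous.tendsto 0).comp hpow
  simpa using lt_of_tendsto_iterate_of_forall_lt (map_zero _) hB.continuousAt
    (fun _ ↦ bilinForm_cayleyTransform_lt hunit hneg) hlim hx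

end LyapunovForm

section Matrices

variable {ι : Type*} [Fintype ι]

/-- The real-bilinear form `(z, w) ↦ Re (z* X w)` on complex vectors, the real part of the
sesquilinear form with matrix `X`. -/
noncomputable def reSesqForm (X : Matrix ι ι ℂ) : LinearMap.BilinForm ℝ (ι → ℂ) :=
  LinearMap.mk₂ ℝ (fun z w ↦ (star z ⬝ᵥ X *ᵥ w).re)
    (fun z z' w ↦ by simp [add_dotProduct])
    (fun c z w ↦ by simp)
    (fun z w w' ↦ by simp [mulVec_add, dotProduct_add])
    (fun c z w ↦ by simp [mulVec_smul])

theorem reSesqForm_apply (X : Matrix ι ι ℂ) (z w : ι → ℂ) :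
    reSesqForm X z w = (star z ⬝ᵥ X *ᵥ w).re := rfl

theorem continuous_reSesqForm_self (X : Matrix ι ι ℂ) :
    Continuous fun z ↦ reSesqForm X z z := by
  simp only [reSesqForm_apply]
  fun_prop

theorem re_star_dotProduct_mulVec_pos_of_lyapunov [DecidableEq ι] {A X : Matrix ι ι ℂ}
    (hA : ∀ μ ∈ spectrum ℂ A, μ.re < 0)
    (hneg : ∀ z, z ≠ 0 → (star z ⬝ᵥ (Aᴴ * X + X * A) *ᵥ z).re < 0) {z : ι → ℂ} (hz : z ≠ 0) :
    0 < (star z ⬝ᵥ X *ᵥ z).re := by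
  let φ := toLinAlgEquiv'.trans (Module.End.toContinuousLinearMap (𝕜 := ℂ) (ι → ℂ))
  have hφ : ∀ μ ∈ spectrum ℂ (φ A), μ.re < 0 := by rwa [AlgEquiv.spectrum_eq]
  refine bilinForm_pos_of_lyapunov hφ (continuous_reSesqForm_self X) (fun w hw ↦ ?_) hz
  have hlyap := hneg w hw
  rw [add_mulVec, dotProduct_add, ← mulVec_mulVec, ← mulVec_mulVec, dotProduct_mulVec _ Aᴴ,
    ← star_mulVec, Complex.add_re] at hlyap
  exact hlyap

theorem re_star_dotProduct_map_ofReal_mulVec (M : Matrix ι ι ℝ) (z : ι → ℂ) :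
    (star z ⬝ᵥ M.map Complex.ofReal *ᵥ z).re =
      (fun i ↦ (z i).re) ⬝ᵥ M *ᵥ (fun i ↦ (z i).re) +
        (fun i ↦ (z i).im) ⬝ᵥ M *ᵥ (fun i ↦ (z i).im) := by
  simp [dotProduct, mulVec, Finset.sum_add_distrib]

theorem re_star_dotProduct_map_ofReal_mulVec_pos {S : Matrix ι ι ℝ}
    (hS : ∀ x : ι → ℝ, x ≠ 0 → 0 < x ⬝ᵥ S *ᵥ x) {z : ι → ℂ} (hz : z ≠ 0) :
    0 < (star z ⬝ᵥ S.map Complex.ofReal *ᵥ z).re := by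
  have hnonneg (x : ι → ℝ) : 0 ≤ x ⬝ᵥ S *ᵥ x := by
    obtain rfl | hx := eq_or_ne x 0
    · simp
    · exact (hS x hx).le
  rw [re_star_dotProduct_map_ofReal_mulVec]
  by_cases hre : (fun i ↦ (z i).re) = 0
  · have him : (fun i ↦ (z i).im) ≠ 0 := fun him ↦
      hz <| funext fun i ↦ Complex.ext (congrFun hre i) (congrFun him i)
    exact add_pos_of_nonneg_of_pos (hnonneg _) (hS _ him)
  · exact add_pos_of_pos_of_nonneg (hS _ hre) (hnonneg _)

theorem conjTranspose_mul_add_mul_map_ofReal (A X : Matrix ι ι ℝ) :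
    (A.map Complex.ofReal)ᴴ * X.map Complex.ofReal + X.map Complex.ofReal * A.map Complex.ofReal =
      (Aᵀ * X + X * A).map Complex.ofReal := by
  ext i j
  simp [mul_apply]

theorem stmt_11_general [DecidableEq ι] {A X S : Matrix ι ι ℝ}
    (hA : ∀ μ ∈ spectrum ℂ (A.map Complex.ofReal), μ.re < 0)
    (hSpos : ∀ x : ι → ℝ, x ≠ 0 → 0 < x ⬝ᵥ S *ᵥ x) (hLyap : Aᵀ * X + X * A + S = 0) :
    ∀ x : ι → ℝ, x ≠ 0 → 0 < x ⬝ᵥ X *ᵥ x := by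
  intro x hx
  have hneg : ∀ z : ι → ℂ, z ≠ 0 → (star z ⬝ᵥ ((A.map Complex.ofReal)ᴴ * X.map Complex.ofReal +
      X.map Complex.ofReal * A.map Complex.ofReal) *ᵥ z).re < 0 := fun z hz ↦ by
    rw [conjTranspose_mul_add_mul_map_ofReal, eq_neg_of_add_eq_zero_left hLyap,
      Matrix.map_neg _ Complex.ofReal_neg, neg_mulVec, dotProduct_neg, Complex.neg_re, neg_lt_zero]
    exact re_star_dotProduct_map_ofReal_mulVec_pos hSpos hz
  have hz : (fun i ↦ (x i : ℂ)) ≠ 0 := fun h ↦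
    hx <| funext fun i ↦ Complex.ofReal_eq_zero.mp (congrFun h i)
  have hpos := re_star_dotProduct_mulVec_pos_of_lyapunov hA hneg hz
  rw [re_star_dotProduct_map_ofReal_mulVec] at hpos
  simpa [← Pi.zero_def] using hpos

end Matrices

/-- Part II of the proof of Lemma 2: a symmetric solution `X` of the Lyapunov equation
`AᵀX + XA + S = 0` with `A` Hurwitz and `S` symmetric positive definite is positive
definite. -/
theorem stmt_11 (n : ℕ) (hn : 1 ≤ n) (A X S : Matrix (Fin n) (Fin n) ℝ)
    (hA : IsHurwitz A)
    (hXsymm : X.IsSymm)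
    (hSsymm : S.IsSymm)
    (hSpos : ∀ x : Fin n → ℝ, x ≠ 0 → 0 < x ⬝ᵥ S.mulVec x)
    (hLyap : Aᵀ * X + X * A + S = 0) :
    ∀ x : Fin n → ℝ, x ≠ 0 → 0 < x ⬝ᵥ X.mulVec x :=
  stmt_11_general hA hSpos hLyap
end
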